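/- For every k ≥ 2 and every real M > 0, there exists a k-typed Schelling game (with stubborn agents) that admits an equilibrium assignment and in which there is an assignment v* such that SW(v*) ≥ M · SW(v) for every equilibrium assignment v; consequently the price of stability of k-typed Schelling games is unbounded. -/

import Mathlib

/-- A (social) Schelling game: agents `A`, of which `strategic` are the strategic
ones (the rest being stubborn), a social network `net` on the agents (the friends
of an agent are her neighbors in `net`, all other agents are her enemies), a
topology `top` on the set of locations `V`, and the preferred locations `loc`
of the (stubborn) agents. -/
structure SchellingGame (A V : Type) where
  strategic : Finset A
  net : SimpleGraph A
  top : SimpleGraph V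
  loc : A → V

namespace SchellingGame

variable {A V : Type} [Fintype A] [DecidableEq A] [Fintype V] [DecidableEq V]

/-- There are `n ≥ 2` agents, strictly more locations than agents, and the
stubborn agents have pairwise distinct preferred locations. -/
def WellFormed (g : SchellingGame A V) : Prop :=
  2 ≤ Fintype.card A ∧ Fintype.card A < Fintype.card V ∧
    Set.InjOn g.loc ↑(g.strategicᶜ)

/-- An assignment is an injective placement of the agents on the nodes of the
topology which places every stubborn agent at her preferred location. -/
def IsAssignment (g : SchellingGame A V) (v : A → V) : Prop :=
  Function.Injective v ∧ ∀ i ∉ g.strategic, v i = g.loc i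

/-- The number of friends of `i` occupying nodes adjacent to `v i`. -/
noncomputable def fcount (g : SchellingGame A V) (v : A → V) (i : A) : ℕ :=
  Nat.card {j : A // g.net.Adj i j ∧ g.top.Adj (v i) (v j)}

/-- The number of enemies of `i` occupying nodes adjacent to `v i`. -/
noncomputable def ecount (g : SchellingGame A V) (v : A → V) (i : A) : ℕ :=
  Nat.card {j : A // j ≠ i ∧ ¬ g.net.Adj i j ∧ g.top.Adj (v i) (v j)}

/-- The utility of agent `i` under assignment `v`: `0` if `i` has no adjacent
friends, and otherwise the fraction of friends among her occupied neighbors. -/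
noncomputable def util (g : SchellingGame A V) (v : A → V) (i : A) : ℚ :=
  if g.fcount v i = 0 then 0
  else (g.fcount v i : ℚ) / ((g.fcount v i : ℚ) + (g.ecount v i : ℚ))

/-- An assignment is an equilibrium if no strategic agent can strictly increase
her utility by relocating to an unoccupied node. -/
def IsEquilibrium (g : SchellingGame A V) (v : A → V) : Prop :=
  g.IsAssignment v ∧ ∀ i ∈ g.strategic, ∀ z : V, (∀ j : A, v j ≠ z) →
    g.util (Function.update v i z) i ≤ g.util v i

/-- The social welfare: the total utility of the strategic agents. -/
noncomputable def SW (g : SchellingGame A V) (v : A → V) : ℚ :=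
  ∑ i ∈ g.strategic, g.util v i

/-- `g` is a `k`-typed Schelling game with type map `typ`: two distinct agents are
friends iff they have the same type, and every type is nonempty. -/
def IsTypedGame (g : SchellingGame A V) (k : ℕ) (typ : A → Fin k) : Prop :=
  (∀ i j : A, g.net.Adj i j ↔ (i ≠ j ∧ typ i = typ j)) ∧ ∀ c : Fin k, ∃ i : A, typ i = c

end SchellingGame

/-- A star graph: one center node adjacent to all other nodes, and no other edges. -/
def IsStar {V : Type} (G : SimpleGraph V) : Prop :=
  ∃ c : V, ∀ a b : V, G.Adj a b ↔ (a ≠ b ∧ (a = c ∨ b = c))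

namespace PoS15

/-- Type of an agent: agents 0, 1, 2 have type 0, the others have nonzero types. -/
def typ (E k : ℕ) (hk : 2 ≤ k) (i : Fin (E + 3)) : Fin k :=
  ⟨min (i.val - 2) (k - 1), by omega⟩

/-- Topology adjacency, oriented. Node 0 hangs off node 1; node 1 sees the `E` enemies;
node 2 sees one friend (node 3) and `E - 1` enemies. -/
def R (a b : ℕ) : Prop :=
  (a = 0 ∧ b = 1) ∨ (a = 1 ∧ 4 ≤ b) ∨ (a = 2 ∧ b = 3) ∨ (a = 2 ∧ 5 ≤ b)

/-- The game: agents 0 and 1 are strategic, agent `i ≥ 2` is stubborn at node `i + 1`. -/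
def game (E k : ℕ) (hk : 2 ≤ k) : SchellingGame (Fin (E + 3)) (Fin (E + 4)) where
  strategic := {0, 1}
  net :=
    { Adj := fun i j => i ≠ j ∧ typ E k hk i = typ E k hk j
      symm := ⟨fun _ _ h => ⟨h.1.symm, h.2.symm⟩⟩
      loopless := ⟨fun _ h => h.1 rfl⟩ }
  top :=
    { Adj := fun a b => R a.val b.val ∨ R b.val a.val
      symm := ⟨fun _ _ h => h.symm⟩
      loopless := ⟨fun a h => by unfold R at h; omega⟩ }
  loc := fun i => i.succ

lemma val1 (E : ℕ) : ((1 : Fin (E + 3)) : ℕ) = 1 := rfl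

lemma net_adj (E k : ℕ) (hk : 2 ≤ k) (i j : Fin (E + 3)) (hi : i.val < 2) :
    (game E k hk).net.Adj i j ↔ i.val ≠ j.val ∧ j.val < 3 := by
  simp only [game, typ, ne_eq, Fin.ext_iff]
  omega

lemma top_adj (E k : ℕ) (hk : 2 ≤ k) (a b : Fin (E + 4)) :
    (game E k hk).top.Adj a b ↔
      ((a.val = 0 ∧ b.val = 1) ∨ (a.val = 1 ∧ 4 ≤ b.val) ∨ (a.val = 2 ∧ b.val = 3) ∨
        (a.val = 2 ∧ 5 ≤ b.val)) ∨
      ((b.val = 0 ∧ a.val = 1) ∨ (b.val = 1 ∧ 4 ≤ a.val) ∨ (b.val = 2 ∧ a.val = 3) ∨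
        (b.val = 2 ∧ 5 ≤ a.val)) := Iff.rfl

lemma card_eq {n : ℕ} (p : Fin n → Prop) (s : Finset (Fin n)) (h : ∀ j, p j ↔ j ∈ s) :
    Nat.card {j // p j} = s.card := by
  rw [show {j // p j} = {j // j ∈ s} from by simp only [h]]
  simp

lemma util_eq (E k : ℕ) (hk : 2 ≤ k) (hE : 2 ≤ E) (v : Fin (E + 3) → Fin (E + 4))
    (hv : ∀ j : Fin (E + 3), 2 ≤ j.val → (v j).val = j.val + 1)
    (i o : Fin (E + 3)) (hio : i.val + o.val = 1)
    (hx : (v i).val < 3) (hy : (v o).val < 3) (hne : (v i).val ≠ (v o).val) :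
    (game E k hk).util v i =
      if (v i).val = 0 then (if (v o).val = 1 then 1 else 0)
      else if (v i).val = 1 then (if (v o).val = 0 then 1 / (1 + (E : ℚ)) else 0)
      else 1 / (E : ℚ) := by
  have hi : i.val < 2 := by omega
  have key : ∀ j : Fin (E + 3), j = i ∨ j = o ∨ (2 ≤ j.val ∧ (v j).val = j.val + 1) := by
    intro j
    by_cases h : 2 ≤ j.val
    · exact Or.inr (Or.inr ⟨h, hv j h⟩)
    · simp only [Fin.ext_iff]; omega
  have hf : (game E k hk).fcount v i =
      if (v i).val = 0 then (if (v o).val = 1 then 1 else 0)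
      else if (v i).val = 1 then (if (v o).val = 0 then 1 else 0) else 1 := by
    unfold SchellingGame.fcount
    simp only [net_adj E k hk i _ hi]
    rw [card_eq _ (if (v i).val = 0 then (if (v o).val = 1 then {o} else ∅)
      else if (v i).val = 1 then (if (v o).val = 0 then {o} else ∅)
      else {(⟨2, by omega⟩ : Fin (E + 3))})]
    · split_ifs <;> rfl
    · intro j
      simp only [top_adj]
      rcases key j with rfl | rfl | ⟨h1, h2⟩ <;> split_ifs <;>
        simp only [Finset.mem_singleton, Finset.notMem_empty, iff_false, iff_true, Fin.ext_iff] <;> omega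
  have he : (game E k hk).ecount v i =
      if (v i).val = 0 then 0 else if (v i).val = 1 then E else E - 1 := by
    unfold SchellingGame.ecount
    simp only [net_adj E k hk i _ hi]
    rw [card_eq _ (if (v i).val = 0 then ∅
      else if (v i).val = 1 then Finset.Ici (⟨3, by omega⟩ : Fin (E + 3))
      else Finset.Ici (⟨4, by omega⟩ : Fin (E + 3)))]
    · split_ifs <;> simp <;> omega
    · intro j
      simp only [top_adj]
      rcases key j with rfl | rfl | ⟨h1, h2⟩ <;> split_ifs <;>
        simp only [Finset.mem_Ici, Finset.notMem_empty, iff_false, iff_true, Fin.ext_iff, Fin.le_def, ne_eq] <;> omega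
  unfold SchellingGame.util
  rw [hf, he]
  have : ((E - 1 : ℕ) : ℚ) = (E : ℚ) - 1 := by
    rw [Nat.cast_sub (by omega)]; simp
  split_ifs <;> first | omega | contradiction | (simp_all; done) | (simp [this]; done)

/-- Value form of the equilibrium condition for the strategic agents. -/
lemma assign_val (E k : ℕ) (hk : 2 ≤ k) (v : Fin (E + 3) → Fin (E + 4))
    (h : (game E k hk).IsAssignment v) :
    (∀ j : Fin (E + 3), 2 ≤ j.val → (v j).val = j.val + 1) ∧
    (∀ i : Fin (E + 3), i.val < 2 → (v i).val < 3) := by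
  have h1 : ∀ j : Fin (E + 3), 2 ≤ j.val → (v j).val = j.val + 1 := by
    intro j hj
    rw [h.2 j (by
      simp only [game, Finset.mem_insert, Finset.mem_singleton, Fin.ext_iff, val1, Fin.val_zero]
      omega)]
    simp [game]
  refine ⟨h1, fun i hi => ?_⟩
  by_contra hc
  have hlt := (v i).isLt
  have := h1 ⟨(v i).val - 1, by omega⟩ (by simp only; omega)
  have h3 : v i = v ⟨(v i).val - 1, by omega⟩ := by
    apply Fin.ext; rw [this]; simp only; omega
  have h4 := congrArg Fin.val (h.1 h3)
  simp only at h4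
  omega

lemma SW_eq (E k : ℕ) (hk : 2 ≤ k) (v : Fin (E + 3) → Fin (E + 4)) :
    (game E k hk).SW v = (game E k hk).util v 0 + (game E k hk).util v 1 := by
  unfold SchellingGame.SW
  rw [show (game E k hk).strategic = {0, 1} from rfl, Finset.sum_pair]
  simp [Fin.ext_iff]

/-- Utility after a deviation of `i` to a free node `z`. -/
lemma util_dev (E k : ℕ) (hk : 2 ≤ k) (hE : 2 ≤ E) (v : Fin (E + 3) → Fin (E + 4))
    (h : (game E k hk).IsAssignment v)
    (i o : Fin (E + 3)) (hio : i.val + o.val = 1) (z : Fin (E + 4)) (hz : z.val < 3)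
    (hne : z.val ≠ (v o).val) :
    (game E k hk).util (Function.update v i z) i =
      if z.val = 0 then (if (v o).val = 1 then 1 else 0)
      else if z.val = 1 then (if (v o).val = 0 then 1 / (1 + (E : ℚ)) else 0)
      else 1 / (E : ℚ) := by
  obtain ⟨h1, h2⟩ := assign_val E k hk v h
  have hoi : o ≠ i := by rintro rfl; omega
  have := util_eq E k hk hE (Function.update v i z)
    (fun j hj => by
      rw [Function.update_of_ne (by rintro rfl; omega)]; exact h1 j hj) i o hio
    (by simpa using hz) (by rw [Function.update_of_ne hoi]; exact h2 o (by omega))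
    (by rw [Function.update_of_ne hoi]; simpa using hne)
  rw [this, Function.update_of_ne hoi, Function.update_self]

/-- Nodes below 3 not used by agents 0, 1 are free. -/
lemma free (E k : ℕ) (hk : 2 ≤ k) (v : Fin (E + 3) → Fin (E + 4))
    (h : (game E k hk).IsAssignment v) (z : Fin (E + 4)) :
    (∀ j, v j ≠ z) ↔ (z.val < 3 ∧ z.val ≠ (v 0).val ∧ z.val ≠ (v 1).val) := by
  obtain ⟨h1, h2⟩ := assign_val E k hk v h
  constructor
  · intro hj
    refine ⟨?_, fun hh => hj 0 (Fin.ext hh.symm), fun hh => hj 1 (Fin.ext hh.symm)⟩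
    by_contra hc
    have hlt := z.isLt
    apply hj ⟨z.val - 1, by omega⟩
    apply Fin.ext
    rw [h1 _ (by simp only; omega)]
    simp only; omega
  · rintro ⟨hz, h3, h4⟩ j rfl
    by_cases hj : 2 ≤ j.val
    · have := h1 j hj; omega
    · have : j = 0 ∨ j = 1 := by simp only [Fin.ext_iff, val1, Fin.val_zero]; omega
      rcases this with rfl | rfl
      · exact h3 rfl
      · exact h4 rfl

/-- In an equilibrium no strategic agent `i` sits at node 1, and they do not leave node 2 free. -/
lemma eq_SW (E k : ℕ) (hk : 2 ≤ k) (hE : 2 ≤ E) (v : Fin (E + 3) → Fin (E + 4))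
    (h : (game E k hk).IsEquilibrium v) : (game E k hk).SW v = 1 / (E : ℚ) := by
  obtain ⟨ha, hd⟩ := h
  obtain ⟨h1, h2⟩ := assign_val E k hk v ha
  have hE' : (2 : ℚ) ≤ E := by exact_mod_cast hE
  have a0 := h2 0 (by simp)
  have a1 := h2 1 (by rw [val1]; omega)
  have hne : (v 0).val ≠ (v 1).val := fun hh => by
    have := ha.1 (Fin.ext hh); simp [Fin.ext_iff] at this
  have u0 := util_eq E k hk hE v h1 0 1 (by simp) a0 a1 hne
  have u1 := util_eq E k hk hE v h1 1 0 (by simp) a1 a0 hne.symm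
  have d0 : ∀ z : Fin (E + 4), _ := fun z => hd 0 (by simp [game]) z
  have d1 : ∀ z : Fin (E + 4), _ := fun z => hd 1 (by simp [game]) z
  simp only [free E k hk v ha] at d0 d1
  have e0 := util_dev E k hk hE v ha 0 1 (by simp)
  have e1 := util_dev E k hk hE v ha 1 0 (by simp)
  have lt1 : 1 / (1 + (E : ℚ)) < 1 / (E : ℚ) :=
    one_div_lt_one_div_of_lt (by linarith) (by linarith)
  have lt2 : 1 / (E : ℚ) < 1 := by rw [div_lt_one] <;> linarith
  rw [SW_eq, u0, u1]
  rw [u0] at d0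
  rw [u1] at d1
  have z0 : ((⟨0, by omega⟩ : Fin (E + 4)) : ℕ) = 0 := rfl
  have z2 : ((⟨2, by omega⟩ : Fin (E + 4)) : ℕ) = 2 := rfl
  have cases6 : ((v 0).val = 0 ∧ (v 1).val = 1) ∨ ((v 0).val = 1 ∧ (v 1).val = 0) ∨
      ((v 0).val = 0 ∧ (v 1).val = 2) ∨ ((v 0).val = 2 ∧ (v 1).val = 0) ∨
      ((v 0).val = 1 ∧ (v 1).val = 2) ∨ ((v 0).val = 2 ∧ (v 1).val = 1) := by omega
  rcases cases6 with ⟨p, q⟩ | ⟨p, q⟩ | ⟨p, q⟩ | ⟨p, q⟩ | ⟨p, q⟩ | ⟨p, q⟩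
  · have A := d1 ⟨2, by omega⟩ (by omega)
    rw [e1 ⟨2, by omega⟩ (by omega) (by omega)] at A
    simp only [p, q] at A; norm_num at A lt1; linarith
  · have A := d0 ⟨2, by omega⟩ (by omega)
    rw [e0 ⟨2, by omega⟩ (by omega) (by omega)] at A
    simp only [p, q] at A; norm_num at A lt1; linarith
  · simp [p, q]
  · simp [p, q]
  · have A := d1 ⟨0, by omega⟩ (by omega)
    rw [e1 ⟨0, by omega⟩ (by omega) (by omega)] at A
    simp only [p, q] at A; norm_num at A lt2; linarith
  · have A := d0 ⟨0, by omega⟩ (by omega)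
    rw [e0 ⟨0, by omega⟩ (by omega) (by omega)] at A
    simp only [p, q] at A; norm_num at A lt2; linarith

/-- Assignment with agents 0 and 1 at nodes 0 and `c`. -/
def asg (E c : ℕ) (hc : c < 3) (i : Fin (E + 3)) : Fin (E + 4) :=
  ⟨if i.val = 0 then 0 else if i.val = 1 then c else i.val + 1, by split_ifs <;> omega⟩

lemma asg_ok (E k : ℕ) (hk : 2 ≤ k) (c : ℕ) (hc : c < 3) (hc0 : 0 < c) :
    (game E k hk).IsAssignment (asg E c hc) := by
  constructor
  · intro i j hij
    simp only [asg, Fin.ext_iff] at hij ⊢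
    split_ifs at hij <;> omega
  · intro i hi
    simp only [game, Finset.mem_insert, Finset.mem_singleton, Fin.ext_iff, val1,
      Fin.val_zero] at hi
    simp only [game, asg, Fin.ext_iff, Fin.val_succ]
    split_ifs <;> omega

lemma asg_eq (E k : ℕ) (hk : 2 ≤ k) (hE : 2 ≤ E) :
    (game E k hk).IsEquilibrium (asg E 2 (by omega)) := by
  have ha := asg_ok E k hk 2 (by omega) (by omega)
  obtain ⟨h1, h2⟩ := assign_val E k hk _ ha
  have p : (asg E 2 (by omega) 0).val = 0 := rfl
  have q : (asg E 2 (by omega) 1).val = 2 := rfl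
  have hE' : (2 : ℚ) ≤ E := by exact_mod_cast hE
  have lt1 : 1 / (1 + (E : ℚ)) < 1 / (E : ℚ) :=
    one_div_lt_one_div_of_lt (by linarith) (by linarith)
  refine ⟨ha, fun i hi z hz => ?_⟩
  rw [free E k hk _ ha, p, q] at hz
  have hz1 : z.val = 1 := by omega
  have hi' : i = 0 ∨ i = 1 := by simpa [game] using hi
  rcases hi' with rfl | rfl
  · rw [util_dev E k hk hE _ ha 0 1 (by simp) z (by omega) (by omega),
      util_eq E k hk hE _ h1 0 1 (by simp) (by omega) (by omega) (by omega)]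
    simp [p, q, hz1]
  · rw [util_dev E k hk hE _ ha 1 0 (by simp) z (by omega) (by omega),
      util_eq E k hk hE _ h1 1 0 (by simp) (by omega) (by omega) (by omega)]
    simp only [p, q, hz1]
    norm_num at lt1 ⊢
    linarith

lemma asg_SW (E k : ℕ) (hk : 2 ≤ k) (hE : 2 ≤ E) :
    (game E k hk).SW (asg E 1 (by omega)) = 1 + 1 / (1 + (E : ℚ)) := by
  have ha := asg_ok E k hk 1 (by omega) (by omega)
  obtain ⟨h1, h2⟩ := assign_val E k hk _ ha
  have p : (asg E 1 (by omega) 0).val = 0 := rfl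
  have q : (asg E 1 (by omega) 1).val = 1 := rfl
  rw [SW_eq, util_eq E k hk hE _ h1 0 1 (by simp) (by omega) (by omega) (by omega),
    util_eq E k hk hE _ h1 1 0 (by simp) (by omega) (by omega) (by omega)]
  simp [p, q]

end PoS15

/-- for every k ≥ 2 and M > 0 there is a k-typed Schelling game (with
stubborn agents) admitting an equilibrium, together with an assignment v* whose social
welfare is at least M times the social welfare of every equilibrium; hence the price
of stability of k-typed Schelling games is unbounded. -/
theorem stmt15 (k : ℕ) (hk : 2 ≤ k) (M : ℚ) (hM : 0 < M) :
    ∃ (nA nV : ℕ) (g : SchellingGame (Fin nA) (Fin nV)) (typ : Fin nA → Fin k),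
      g.WellFormed ∧ g.IsTypedGame k typ ∧ g.strategic ≠ Finset.univ ∧
      (∃ v, g.IsEquilibrium v) ∧
      (∃ w, g.IsAssignment w ∧ ∀ v, g.IsEquilibrium v → M * g.SW v ≤ g.SW w) := by
  obtain ⟨m, hm⟩ := exists_nat_ge M
  have hE : 2 ≤ k + m := by omega
  have hEM : M ≤ ((k + m : ℕ) : ℚ) := by push_cast; linarith [(Nat.cast_nonneg k : (0 : ℚ) ≤ k)]
  refine ⟨k + m + 3, k + m + 4, PoS15.game (k + m) k hk, PoS15.typ (k + m) k hk,
    ⟨by simp, by simp, ?_⟩, ⟨fun i j => Iff.rfl, ?_⟩, ?_,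
    ⟨_, PoS15.asg_eq (k + m) k hk hE⟩,
    PoS15.asg (k + m) 1 (by omega), PoS15.asg_ok (k + m) k hk 1 _ (by omega), ?_⟩
  · exact (Fin.succ_injective _).injOn
  · intro c
    have hc := c.isLt
    refine ⟨⟨c.val + 2, by omega⟩, ?_⟩
    apply Fin.ext
    simp only [PoS15.typ]
    omega
  · intro h
    have : (⟨2, by omega⟩ : Fin (k + m + 3)) ∈ (PoS15.game (k + m) k hk).strategic := by
      rw [h]; exact Finset.mem_univ _
    simp only [PoS15.game, Finset.mem_insert, Finset.mem_singleton, Fin.ext_iff, PoS15.val1,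
      Fin.val_zero] at this
    omega
  · intro v hv
    rw [PoS15.eq_SW (k + m) k hk hE v hv, PoS15.asg_SW (k + m) k hk hE]
    have hpos : (0 : ℚ) < ((k + m : ℕ) : ℚ) := by exact_mod_cast (by omega : 0 < k + m)
    have h1 : M * (1 / ((k + m : ℕ) : ℚ)) ≤ 1 := by
      rw [mul_one_div, div_le_one hpos]; exact hEM
    have h2 : 0 ≤ 1 / (1 + ((k + m : ℕ) : ℚ)) := by positivity
    linarith
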